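/- arXiv:1302.0806 — 2 statements merged into one kernel-verified Lean document; each statement's English description precedes it below -/
import Mathlib

section
/- Let m ≥ 1, let R be an m×m upper triangular complex matrix, and let I ⊆ {1,…,m} be any subset. Then det(R_Iᴴ R_I) ≥ ∏_{i∈I} |r_{ii}|², where R_I denotes the m×|I| submatrix of R formed by the columns with indices in I, and r_{ii} is the i-th diagonal entry of R. -/
open Matrix BigOperators

/-!
`Aᴴ A` is the sum over the rows of `A` of positive semidefinite rank-one matrices, so deleting rows
decreases it in the Loewner order. The determinant is monotone on positive semidefinite matrices,
hence every maximal minor of `A` satisfies `|minor|² ≤ det (Aᴴ A)`; this replaces the Cauchy–Binet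
formula, of which only one summand is needed. For `A = R_I` with `R` upper triangular, the rows
indexed by `I` form an upper triangular matrix, whose determinant is `∏ i ∈ I, r_ii`.
-/

open scoped ComplexOrder MatrixOrder

lemma conjTranspose_mul_self_eq_sum_vecMulVec {m n α : Type*} [Fintype m]
    [NonUnitalNonAssocSemiring α] [Star α] (A : Matrix m n α) :
    Aᴴ * A = ∑ i, vecMulVec (star (A i)) (A i) := by
  ext j k
  simp only [mul_apply, Matrix.sum_apply, vecMulVec_apply, conjTranspose_apply, Pi.star_apply]

section Loewner

variable {𝕜 m n : Type*} [RCLike 𝕜] [Fintype m]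

lemma conjTranspose_mul_self_submatrix_le {l : Type*} [Fintype l] [Finite n] (A : Matrix m n 𝕜)
    {f : l → m} (hf : f.Injective) :
    (A.submatrix f id)ᴴ * A.submatrix f id ≤ Aᴴ * A := by
  simp only [conjTranspose_mul_self_eq_sum_vecMulVec]
  calc ∑ i, vecMulVec (star (A (f i))) (A (f i))
      = ∑ i ∈ Finset.univ.map ⟨f, hf⟩, vecMulVec (star (A i)) (A i) :=
        (Finset.sum_map Finset.univ ⟨f, hf⟩ fun i ↦ vecMulVec (star (A i)) (A i)).symm
    _ ≤ ∑ i, vecMulVec (star (A i)) (A i) :=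
        Finset.sum_le_univ_sum_of_nonneg fun i ↦ (posSemidef_vecMulVec_star_self (A i)).nonneg

variable [Fintype n] [DecidableEq n]

lemma one_le_det_of_one_le {A : Matrix n n 𝕜} (hA : 1 ≤ A) : 1 ≤ A.det := by
  have hAh : A.IsHermitian := (zero_le_one.trans hA).posSemidef.isHermitian
  have one_le_eigenvalues (i : n) : 1 ≤ hAh.eigenvalues i :=
    (CFC.one_le_iff (R := ℝ) A hAh).mp hA _ (hAh.eigenvalues_mem_spectrum_real i)
  rw [hAh.det_eq_prod_eigenvalues]
  exact_mod_cast Finset.one_le_prod fun i _ ↦ one_le_eigenvalues i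

lemma det_le_det_of_nonneg_of_le {A B : Matrix n n 𝕜} (hA : 0 ≤ A) (hAB : A ≤ B) :
    A.det ≤ B.det := by
  obtain ⟨C, rfl⟩ := CStarAlgebra.nonneg_iff_eq_star_mul_self.mp hA
  rcases eq_or_ne C.det 0 with hC | hC
  · rw [det_mul, hC, mul_zero]
    exact (hA.trans hAB).posSemidef.det_nonneg
  · lift C to (Matrix n n 𝕜)ˣ using (isUnit_iff_isUnit_det C).mpr hC.isUnit
    set D : Matrix n n 𝕜 := ↑C⁻¹
    have hCD : (C : Matrix n n 𝕜) * D = 1 := C.mul_inv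
    have hDC : D * C = 1 := C.inv_mul
    have one_le_conj : 1 ≤ star D * B * D := by
      have conj_le_conj := star_left_conjugate_le_conjugate hAB D
      rwa [mul_assoc, mul_assoc, hCD, mul_one, ← star_mul, hCD, star_one] at conj_le_conj
    have conj_inv_conj : star (C : Matrix n n 𝕜) * (star D * B * D) * C = B :=
      calc star (C : Matrix n n 𝕜) * (star D * B * D) * C
          = star (D * C) * B * (D * C) := by simp only [star_mul, mul_assoc]
        _ = B := by rw [hDC, star_one, one_mul, mul_one]
    calc (star (C : Matrix n n 𝕜) * C).det
        ≤ (star (C : Matrix n n 𝕜) * C).det * (star D * B * D).det :=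
          le_mul_of_one_le_right hA.posSemidef.det_nonneg (one_le_det_of_one_le one_le_conj)
      _ = (star (C : Matrix n n 𝕜) * (star D * B * D) * C).det := by
          rw [← det_mul, det_mul_right_comm]
      _ = B.det := by rw [conj_inv_conj]

lemma norm_det_submatrix_sq_le_det_conjTranspose_mul_self (A : Matrix m n 𝕜) (f : n → m) :
    (‖(A.submatrix f id).det‖ ^ 2 : 𝕜) ≤ (Aᴴ * A).det := by
  by_cases hf : f.Injective
  · calc (‖(A.submatrix f id).det‖ ^ 2 : 𝕜)
        = ((A.submatrix f id)ᴴ * A.submatrix f id).det := by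
          rw [det_mul, det_conjTranspose, RCLike.star_def, RCLike.conj_mul]
      _ ≤ (Aᴴ * A).det :=
          det_le_det_of_nonneg_of_le (posSemidef_conjTranspose_mul_self _).nonneg
            (conjTranspose_mul_self_submatrix_le A hf)
  · obtain ⟨i, j, hij, hne⟩ := Function.not_injective_iff.mp hf
    have det_eq_zero : (A.submatrix f id).det = 0 :=
      det_zero_of_row_eq hne (congrArg A hij)
    simpa [det_eq_zero] using (posSemidef_conjTranspose_mul_self A).det_nonneg

end Loewner

lemma det_submatrix_val_of_isUpperTriangular {n α : Type*} [LinearOrder n] [CommRing α]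
    {R : Matrix n n α} (hR : R.IsUpperTriangular) (I : Finset n) :
    (R.submatrix (Subtype.val : I → n) Subtype.val).det = ∏ i ∈ I, R i i := by
  have hI : (R.submatrix (Subtype.val : I → n) Subtype.val).IsUpperTriangular :=
    fun _ _ hij ↦ hR hij
  rw [det_of_isUpperTriangular hI]
  exact Finset.prod_coe_sort I fun i ↦ R i i

theorem stmt2_general {𝕜 n : Type*} [RCLike 𝕜] [Fintype n] [LinearOrder n] {R : Matrix n n 𝕜}
    (hR : R.IsUpperTriangular) (I : Finset n) :
    ((∏ i ∈ I, ‖R i i‖ ^ 2 : ℝ) : 𝕜) ≤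
      ((R.submatrix id (Subtype.val : I → n))ᴴ * R.submatrix id (Subtype.val : I → n)).det := by
  have minor_le_gram := norm_det_submatrix_sq_le_det_conjTranspose_mul_self
    (R.submatrix id (Subtype.val : I → n)) Subtype.val
  rwa [submatrix_submatrix, Function.id_comp, Function.comp_id,
    det_submatrix_val_of_isUpperTriangular hR, norm_prod, ← RCLike.ofReal_pow,
    ← Finset.prod_pow] at minor_le_gram

/-- key step in Lemma 3 of the paper.
Let `m ≥ 1`, `R` an `m × m` upper triangular complex matrix, and `I` any subset
of the column indices.  Then the Gram determinant of the submatrix `R_I` of the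
columns of `R` indexed by `I` satisfies `det(R_Iᴴ R_I) ≥ ∏_{i ∈ I} |r_{ii}|²`
(the Gram determinant being a nonnegative real, we state the bound on its real
part). -/
theorem stmt2 (m : ℕ) (hm : 1 ≤ m) (R : Matrix (Fin m) (Fin m) ℂ)
    (hR : R.BlockTriangular (id : Fin m → Fin m)) (I : Finset (Fin m)) :
    ∏ i ∈ I, ‖R i i‖ ^ 2 ≤
      (((R.submatrix id (fun i : {x // x ∈ I} => i.1))ᴴ *
        (R.submatrix id (fun i : {x // x ∈ I} => i.1))).det).re :=
  (Complex.le_def.mp (stmt2_general hR I)).1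
end

section
/- Let m, M ≥ 1, let H be an m×M complex matrix, let c > 0, and let Ψ be an M×M Hermitian complex matrix whose eigenvalues λ_1 ≥ λ_2 ≥ … ≥ λ_M satisfy λ_M ≥ c. Set m' = min(m, M). Then the positive real number det(I_m + H Ψ Hᴴ) satisfies det(I_m + H Ψ Hᴴ) ≤ ( ∏_{i=1}^{m'} λ_i ) · ( c^{−1} + ‖H‖_F² )^{m'}, where ‖H‖_F is the Frobenius norm of H. -/
open Matrix BigOperators

/-!
Let `s = ‖H‖_F²`, so that `H Hᴴ ≤ s` and `Hᴴ H ≤ s` in the Loewner order. For any level `t ≥ 0`,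
truncating the spectrum of `Ψ` gives `Ψ ≤ t + E` with `E = (Ψ - t)₊`, hence
`1 + H Ψ Hᴴ ≤ b (1 + b⁻¹ H E Hᴴ)` with `b = 1 + t s`. Monotonicity of the determinant and
Sylvester's identity `det (1 + A B) = det (1 + B A)` then yield
`det (1 + H Ψ Hᴴ) ≤ b ^ m ∏ᵢ (1 + (s / b) (λᵢ - t)₊)`.
For `m < M` and `t = λ_{m+1}` only the first `m` factors differ from `1`, each equals
`(1 + s λᵢ) / b`, and the powers of `b` cancel; for `M ≤ m` one takes `t = 0`. In both cases the
bound is `∏ (1 + s λᵢ)` over `i ≤ min m M`, and `1 + s λᵢ ≤ λᵢ (c⁻¹ + s)` because `c ≤ λᵢ`.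
-/

theorem prod_castLE_min {α : Type*} [CommMonoid α] {M : ℕ} (k : ℕ) (f : Fin M → α) :
    ∏ i : Fin (min k M), f (Fin.castLE (Nat.min_le_right k M) i) =
      ∏ i : Fin M with i.val < k, f i := by
  have hmap : ({i : Fin M | i.val < k} : Finset (Fin M)) =
      Finset.univ.map (Fin.castLEEmb (Nat.min_le_right k M)) := by
    ext i
    simp only [Finset.mem_filter_univ, Finset.mem_map, Finset.mem_univ, true_and]
    exact ⟨fun hi => ⟨⟨i, lt_min hi i.isLt⟩, rfl⟩,
      fun ⟨j, hj⟩ => hj ▸ j.isLt.trans_le (Nat.min_le_left k M)⟩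
  rw [hmap, Finset.prod_map]
  rfl

theorem prod_one_add_mul_max_eq_prod_filter {ι : Type*} [Fintype ι] (p : ι → Prop)
    [DecidablePred p] {lam : ι → ℝ} {s t : ℝ} (hb : 1 + t * s ≠ 0) (hge : ∀ i, p i → t ≤ lam i)
    (hle : ∀ i, ¬ p i → lam i ≤ t) :
    ∏ i, (1 + s / (1 + t * s) * max (lam i - t) 0) =
      ∏ i with p i, (1 + s * lam i) / (1 + t * s) := by
  rw [Finset.prod_filter]
  refine Finset.prod_congr rfl fun i _ => ?_
  split_ifs with hi
  · rw [max_eq_left (sub_nonneg.2 (hge i hi)), eq_div_iff hb]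
    linear_combination (lam i - t) * div_mul_cancel₀ s hb
  · rw [max_eq_right (sub_nonpos.2 (hle i hi)), mul_zero, add_zero]

theorem exists_pow_mul_prod_max_eq_prod_filter {M : ℕ} {lam : Fin M → ℝ} (hanti : Antitone lam)
    (hlam : ∀ i, 0 ≤ lam i) {s : ℝ} (hs : 0 ≤ s) (k : ℕ) :
    ∃ t, 0 ≤ t ∧ (1 + t * s) ^ k * ∏ i, (1 + s / (1 + t * s) * max (lam i - t) 0) =
      ∏ i with i.val < k, (1 + s * lam i) := by
  obtain hMk | hkM := le_or_gt M k
  · have hlt : ∀ i : Fin M, i.val < k := fun i => i.isLt.trans_le hMk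
    refine ⟨0, le_rfl, ?_⟩
    rw [prod_one_add_mul_max_eq_prod_filter (fun i : Fin M => i.val < k) (by norm_num)
      (fun i _ => hlam i) (fun i hi => absurd (hlt i) hi)]
    simp only [zero_mul, add_zero, one_pow, div_one, one_mul]
  · set t := lam ⟨k, hkM⟩
    have hb : 1 + t * s ≠ 0 := (add_pos_of_pos_of_nonneg one_pos (mul_nonneg (hlam _) hs)).ne'
    refine ⟨t, hlam _, ?_⟩
    rw [prod_one_add_mul_max_eq_prod_filter (fun i : Fin M => i.val < k) hb
        (fun i hi => hanti (Fin.le_def.2 hi.le)) (fun i hi => hanti (Fin.le_def.2 (not_lt.1 hi))),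
      Finset.prod_div_distrib, Finset.prod_const, Fin.card_filter_val_lt, min_eq_right hkM.le,
      mul_div_cancel₀ _ (pow_ne_zero k hb)]

theorem one_add_mul_le_mul_inv_add {c x : ℝ} (hc : 0 < c) (hx : c ≤ x) (s : ℝ) :
    1 + s * x ≤ x * (c⁻¹ + s) := by
  have : 1 ≤ x * c⁻¹ := (le_mul_inv_iff₀ hc).2 (by rwa [one_mul])
  linarith [mul_add x c⁻¹ s, mul_comm s x]

section

open scoped ComplexOrder MatrixOrder

variable {𝕜 m n : Type*} [RCLike 𝕜] [Fintype n]

theorem mul_mul_conjTranspose_mono [Finite m] (B : Matrix m n 𝕜) {P Q : Matrix n n 𝕜} (h : P ≤ Q) :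
    B * P * Bᴴ ≤ B * Q * Bᴴ := by
  rw [le_iff, ← Matrix.sub_mul, ← Matrix.mul_sub]
  exact (le_iff.1 h).mul_mul_conjTranspose_same B

variable [Fintype m] [DecidableEq m]

theorem det_cfc {A : Matrix m m 𝕜} (hA : A.IsHermitian) (f : ℝ → ℝ) :
    (cfc f A).det = ((∏ i, f (hA.eigenvalues i) : ℝ) : 𝕜) := by
  rw [hA.cfc_eq, IsHermitian.cfc, Unitary.conjStarAlgAut_apply, det_mul_right_comm,
    Unitary.mul_star_self_of_mem hA.eigenvectorUnitary.2, one_mul, det_diagonal, RCLike.ofReal_prod]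
  rfl

theorem one_add_smul_cfc {A : Matrix m m 𝕜} (hA : A.IsHermitian) (r : ℝ) (f : ℝ → ℝ)
    (hf : ContinuousOn f (spectrum ℝ A)) :
    1 + r • cfc f A = cfc (fun x => 1 + r * f x) A := by
  rw [cfc_const_add 1 (fun x => r * f x) A, cfc_const_mul r f A, map_one]

theorem one_le_det_one_add {P : Matrix m m 𝕜} (hP : P.PosSemidef) : 1 ≤ (1 + P).det := by
  have h : 1 + P = cfc (fun x : ℝ => 1 + x) P := by
    have hself : IsSelfAdjoint P := hP.1
    rw [cfc_const_add 1 (fun x => x) P, map_one, cfc_id' ℝ P]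
  rw [h, det_cfc hP.1, ← RCLike.ofReal_one, RCLike.ofReal_le_ofReal]
  exact Finset.one_le_prod fun i _ => le_add_of_nonneg_right (hP.eigenvalues_nonneg i)

theorem det_le_det_of_posSemidef_of_le {A B : Matrix m m 𝕜} (hA : A.PosSemidef) (hAB : A ≤ B) :
    A.det ≤ B.det := by
  by_cases hdet : A.det = 0
  · rw [hdet]
    exact (nonneg_iff_posSemidef.1 (hA.nonneg.trans hAB)).det_nonneg
  obtain ⟨C, hC⟩ := CStarAlgebra.nonneg_iff_eq_star_mul_self.1 (sub_nonneg.2 hAB)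
  rw [star_eq_conjTranspose] at hC
  have hB : B = A * (1 + A⁻¹ * Cᴴ * C) := by
    rw [mul_add, Matrix.mul_assoc A⁻¹, mul_nonsing_inv_cancel_left _ _ (isUnit_iff_ne_zero.2 hdet),
      ← hC, mul_one, add_sub_cancel]
  rw [hB, det_mul, det_one_add_mul_comm, ← Matrix.mul_assoc]
  exact le_mul_of_one_le_right hA.det_nonneg
    (one_le_det_one_add (hA.inv.mul_mul_conjTranspose_same C))

theorem le_re_trace_smul_one {P : Matrix m m 𝕜} (hP : P.PosSemidef) :
    P ≤ RCLike.re P.trace • (1 : Matrix m m 𝕜) := by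
  rw [← Algebra.algebraMap_eq_smul_one]
  refine le_algebraMap_of_spectrum_le ?_ hP.1
  rw [hP.1.spectrum_real_eq_range_eigenvalues, hP.1.trace_eq_sum_eigenvalues,
    ← RCLike.ofReal_sum, RCLike.ofReal_re, Set.forall_mem_range]
  exact fun i => Finset.single_le_sum (fun j _ => hP.eigenvalues_nonneg j) (Finset.mem_univ i)

theorem self_mul_conjTranspose_le_sum_norm_sq_smul_one (H : Matrix m n 𝕜) :
    H * Hᴴ ≤ (∑ i, ∑ j, ‖H i j‖ ^ 2) • (1 : Matrix m m 𝕜) := by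
  have htrace : RCLike.re (H * Hᴴ).trace = ∑ i, ∑ j, ‖H i j‖ ^ 2 := by
    simp only [trace, diag_apply, mul_apply, conjTranspose_apply, RCLike.star_def, map_sum,
      RCLike.mul_conj, ← RCLike.ofReal_pow, RCLike.ofReal_re]
  exact htrace ▸ le_re_trace_smul_one (posSemidef_self_mul_conjTranspose H)

variable [DecidableEq n]

theorem conjTranspose_mul_self_le_smul_one {H : Matrix m n 𝕜} {s : ℝ} (hs : 0 ≤ s)
    (hH : H * Hᴴ ≤ s • (1 : Matrix m m 𝕜)) : Hᴴ * H ≤ s • (1 : Matrix n n 𝕜) := by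
  have hP : IsSelfAdjoint (Hᴴ * H) := isHermitian_conjTranspose_mul_self H
  have hsq : (Hᴴ * H) ^ 2 ≤ s • (Hᴴ * H) := by
    have := mul_mul_conjTranspose_mono Hᴴ hH
    simpa only [conjTranspose_conjTranspose, sq, Matrix.mul_assoc, Matrix.mul_smul,
      Matrix.smul_mul, Matrix.one_mul] using this
  rw [← cfc_pow_id (R := ℝ) (Hᴴ * H) 2, ← cfc_const_mul_id s (Hᴴ * H), cfc_le_iff _ _ _] at hsq
  rw [← Algebra.algebraMap_eq_smul_one]
  refine le_algebraMap_of_spectrum_le (fun x hx => ?_) hP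
  nlinarith [hsq x hx]

theorem det_one_add_mul_mul_conjTranspose_le_det_one_add_smul {H : Matrix m n 𝕜} {s : ℝ}
    (hH : Hᴴ * H ≤ s • (1 : Matrix n n 𝕜)) {E : Matrix n n 𝕜} (hE : E.PosSemidef) :
    (1 + H * E * Hᴴ).det ≤ (1 + s • E).det := by
  obtain ⟨R, hR⟩ := CStarAlgebra.nonneg_iff_eq_star_mul_self.1 hE.nonneg
  rw [star_eq_conjTranspose] at hR
  have hswap : (1 + H * E * Hᴴ).det = (1 + R * (Hᴴ * H) * Rᴴ).det := by
    rw [hR, ← Matrix.mul_assoc, Matrix.mul_assoc, det_one_add_mul_comm]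
    simp only [Matrix.mul_assoc]
  have hswap' : (1 + s • E).det = (1 + R * (s • (1 : Matrix n n 𝕜)) * Rᴴ).det := by
    rw [hR, ← Matrix.smul_mul, det_one_add_mul_comm, Matrix.mul_smul, Matrix.mul_smul,
      Matrix.mul_one, Matrix.smul_mul]
  rw [hswap, hswap']
  exact det_le_det_of_posSemidef_of_le
    (.add .one ((posSemidef_conjTranspose_mul_self H).mul_mul_conjTranspose_same R))
    (add_le_add_right (mul_mul_conjTranspose_mono R hH) 1)

theorem det_one_add_mul_mul_conjTranspose_le_of_le_smul_one_add {H : Matrix m n 𝕜} {s t : ℝ}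
    (hs : 0 ≤ s) (hH : H * Hᴴ ≤ s • (1 : Matrix m m 𝕜)) (ht : 0 ≤ t) {Ψ E : Matrix n n 𝕜}
    (hΨ : Ψ.PosSemidef) (hE : E.PosSemidef) (hΨE : Ψ ≤ t • (1 : Matrix n n 𝕜) + E) :
    (1 + H * Ψ * Hᴴ).det ≤
      (1 + t * s) ^ Fintype.card m • (1 + (s / (1 + t * s)) • E).det := by
  set b := 1 + t * s with hb
  have hb0 : 0 < b := by positivity
  have hle : 1 + H * Ψ * Hᴴ ≤ b • (1 + H * (b⁻¹ • E) * Hᴴ) := calc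
    1 + H * Ψ * Hᴴ ≤ 1 + H * (t • (1 : Matrix n n 𝕜) + E) * Hᴴ :=
      add_le_add_right (mul_mul_conjTranspose_mono H hΨE) 1
    _ = 1 + (t • (H * Hᴴ) + H * E * Hᴴ) := by
      simp only [Matrix.mul_add, Matrix.add_mul, Matrix.mul_smul, Matrix.smul_mul, Matrix.mul_one]
    _ ≤ 1 + (t • s • (1 : Matrix m m 𝕜) + H * E * Hᴴ) := by gcongr
    _ = b • (1 + H * (b⁻¹ • E) * Hᴴ) := by
      rw [Matrix.mul_smul, Matrix.smul_mul, smul_add, smul_inv_smul₀ hb0.ne', hb, add_smul,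
        one_smul, smul_smul, add_assoc]
  have hscaled := det_one_add_mul_mul_conjTranspose_le_det_one_add_smul
    (conjTranspose_mul_self_le_smul_one hs hH) (hE.smul (inv_nonneg.2 hb0.le))
  calc
    (1 + H * Ψ * Hᴴ).det ≤ (b • (1 + H * (b⁻¹ • E) * Hᴴ)).det :=
      det_le_det_of_posSemidef_of_le (.add .one (hΨ.mul_mul_conjTranspose_same H)) hle
    _ = b ^ Fintype.card m • (1 + H * (b⁻¹ • E) * Hᴴ).det := det_smul_of_tower _ _
    _ ≤ b ^ Fintype.card m • (1 + (s / b) • E).det := by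
      rw [div_eq_mul_inv, ← smul_smul]
      exact smul_le_smul_of_nonneg_left hscaled (pow_nonneg hb0.le _)

theorem det_one_add_mul_mul_conjTranspose_le_prod_max {H : Matrix m n 𝕜} {s t : ℝ}
    (hs : 0 ≤ s) (hH : H * Hᴴ ≤ s • (1 : Matrix m m 𝕜)) (ht : 0 ≤ t) {Ψ : Matrix n n 𝕜}
    (hΨ : Ψ.PosSemidef) :
    (1 + H * Ψ * Hᴴ).det ≤ (((1 + t * s) ^ Fintype.card m *
      ∏ i, (1 + s / (1 + t * s) * max (hΨ.isHermitian.eigenvalues i - t) 0) : ℝ) : 𝕜) := by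
  set E : Matrix n n 𝕜 := cfc (fun x : ℝ => max (x - t) 0) Ψ
  have hE : E.PosSemidef := nonneg_iff_posSemidef.1 (cfc_nonneg fun _ _ => le_max_right _ _)
  have hΨE : Ψ ≤ t • (1 : Matrix n n 𝕜) + E := by
    have hself : IsSelfAdjoint Ψ := hΨ.1
    rw [← Algebra.algebraMap_eq_smul_one, ← cfc_const_add t _ Ψ]
    nth_rw 1 [← cfc_id' ℝ Ψ]
    exact cfc_mono fun x _ => sub_le_iff_le_add'.1 (le_max_left _ _)
  calc
    (1 + H * Ψ * Hᴴ).det ≤ (1 + t * s) ^ Fintype.card m • (1 + (s / (1 + t * s)) • E).det :=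
      det_one_add_mul_mul_conjTranspose_le_of_le_smul_one_add hs hH ht hΨ hE hΨE
    _ = _ := by
      rw [one_add_smul_cfc hΨ.1 _ _ (by fun_prop), det_cfc hΨ.1, RCLike.real_smul_eq_coe_mul,
        RCLike.ofReal_mul]

theorem det_one_add_mul_mul_conjTranspose_le_prod_filter {H : Matrix m n 𝕜} {s : ℝ}
    (hs : 0 ≤ s) (hH : H * Hᴴ ≤ s • (1 : Matrix m m 𝕜)) {Ψ : Matrix n n 𝕜} (hΨ : Ψ.PosSemidef)
    {M : ℕ} {lam : Fin M → ℝ} (hanti : Antitone lam) (g : Fin M ≃ n)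
    (hlam : ∀ i, lam i = hΨ.isHermitian.eigenvalues (g i)) :
    (1 + H * Ψ * Hᴴ).det ≤
      ((∏ i : Fin M with i.val < Fintype.card m, (1 + s * lam i) : ℝ) : 𝕜) := by
  have hlam0 : ∀ i, 0 ≤ lam i := fun i => hlam i ▸ hΨ.eigenvalues_nonneg (g i)
  obtain ⟨t, ht, hprod⟩ := exists_pow_mul_prod_max_eq_prod_filter hanti hlam0 hs (Fintype.card m)
  have hreindex := g.prod_comp fun j =>
    1 + s / (1 + t * s) * max (hΨ.isHermitian.eigenvalues j - t) 0
  simp only [← hlam] at hreindex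
  rw [← hprod, hreindex]
  exact det_one_add_mul_mul_conjTranspose_le_prod_max hs hH ht hΨ

theorem stmt9_general {m M : ℕ} {H : Matrix (Fin m) (Fin M) 𝕜} {s : ℝ} (hs : 0 ≤ s)
    (hH : H * Hᴴ ≤ s • (1 : Matrix (Fin m) (Fin m) 𝕜)) {c : ℝ} (hc : 0 < c)
    {Ψ : Matrix (Fin M) (Fin M) 𝕜} (hΨ : Ψ.IsHermitian) {lam : Fin M → ℝ} (hanti : Antitone lam)
    (g : Equiv.Perm (Fin M)) (hlam : ∀ i, lam i = hΨ.eigenvalues (g i)) (hmin : ∀ i, c ≤ lam i) :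
    RCLike.re (1 + H * Ψ * Hᴴ).det ≤
      (∏ i : Fin (min m M), lam (Fin.castLE (Nat.min_le_right m M) i)) *
        (c⁻¹ + s) ^ (min m M) := by
  have hlam0 : ∀ i, 0 ≤ lam i := fun i => hc.le.trans (hmin i)
  have hPSD : Ψ.PosSemidef := hΨ.posSemidef_iff_eigenvalues_nonneg.2 fun i => by
    simpa only [hlam, Equiv.apply_symm_apply, Pi.zero_apply] using hlam0 (g.symm i)
  have hdet := det_one_add_mul_mul_conjTranspose_le_prod_filter hs hH hPSD hanti g hlam
  calc
    RCLike.re (1 + H * Ψ * Hᴴ).det ≤ ∏ i : Fin M with i.val < m, (1 + s * lam i) := by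
      simpa only [Fintype.card_fin, RCLike.ofReal_re] using (RCLike.le_iff_re_im.1 hdet).1
    _ = ∏ i : Fin (min m M), (1 + s * lam (Fin.castLE (Nat.min_le_right m M) i)) :=
      (prod_castLE_min m fun i => 1 + s * lam i).symm
    _ ≤ ∏ i : Fin (min m M), lam (Fin.castLE (Nat.min_le_right m M) i) * (c⁻¹ + s) :=
      Finset.prod_le_prod
        (fun i _ => add_nonneg zero_le_one (mul_nonneg hs (hlam0 _)))
        (fun i _ => one_add_mul_le_mul_inv_add hc (hmin _) s)
    _ = _ := by rw [Finset.prod_mul_distrib, Finset.prod_const, Finset.card_fin]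

end

/-- upper-bound chain (tmp47)–(tmp42) in the proof of
Proposition 1 of the paper.  Let `H` be an `m × M` complex matrix, `c > 0`,
and `Ψ` an `M × M` Hermitian matrix whose eigenvalues `lam` (listed in
decreasing order) satisfy `lam_M ≥ c`.  With `m' = min m M`:
`det(I_m + H Ψ Hᴴ) ≤ (∏_{i=1}^{m'} lam_i) ⬝ (c⁻¹ + ‖H‖_F²)^{m'}`,
where `‖H‖_F² = Σ_{i,j} |H i j|²` is the squared Frobenius norm (the
determinant being a positive real, we state the bound on its real part). -/
theorem stmt9 (m M : ℕ) (hm : 1 ≤ m) (hM : 1 ≤ M)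
    (H : Matrix (Fin m) (Fin M) ℂ) (c : ℝ) (hc : 0 < c)
    (Ψ : Matrix (Fin M) (Fin M) ℂ) (hΨ : Ψ.IsHermitian)
    (lam : Fin M → ℝ) (hanti : Antitone lam) (g : Equiv.Perm (Fin M))
    (hlam : ∀ i, lam i = hΨ.eigenvalues (g i))
    (hmin : c ≤ lam ⟨M - 1, by omega⟩) :
    ((1 : Matrix (Fin m) (Fin m) ℂ) + H * Ψ * Hᴴ).det.re ≤
      (∏ i : Fin (min m M), lam (Fin.castLE (Nat.min_le_right m M) i)) *
        (c⁻¹ + ∑ i : Fin m, ∑ j : Fin M, ‖H i j‖ ^ 2) ^ (min m M) :=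
  stmt9_general (by positivity) (self_mul_conjTranspose_le_sum_norm_sq_smul_one H) hc hΨ hanti g
    hlam fun i => hmin.trans (hanti (Fin.le_def.2 (Nat.le_sub_one_of_lt i.isLt)))
end
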